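/- Let c' ∈ c^{∖k} with c' > 0. If ω c' + S(c' − ε_c) ≤ |γ| ≤ ω c' + S(c' + ε_c), then z = sign(γ)·c' is a minimizer over ℝ of the function G. -/

import Mathlib

open Finset Filter

noncomputable section

/-- The sign of a real number, with the convention `sgn 0 = 1`. -/
def sgn (t : ℝ) : ℝ := if t < 0 then -1 else 1

/-- A permutation sorting the absolute values of `β` in nonincreasing order. -/
def sortPerm {p : ℕ} (β : Fin p → ℝ) : Equiv.Perm (Fin p) :=
  (Fin.revPerm).trans (Tuple.sort fun j => |β j|)

/-- The sorted ℓ₁ norm `J(β) = Σ_j λ_j |β|_(j)`. -/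
def sortedL1 {p : ℕ} (lam β : Fin p → ℝ) : ℝ :=
  ∑ j, lam j * |β (sortPerm β j)|

/-- `β(z)`: the vector obtained from `β` by replacing entries of the cluster
`{i : |β i| = ck}` by `sign(β i) * z`. -/
def cupd {p : ℕ} (β : Fin p → ℝ) (ck z : ℝ) : Fin p → ℝ :=
  fun i => if |β i| = ck then sgn (β i) * z else β i

/-- The partial sorted ℓ₁ norm `H(z) = J(β(z))`. -/
def Hfun {p : ℕ} (lam β : Fin p → ℝ) (ck : ℝ) (z : ℝ) : ℝ :=
  sortedL1 lam (cupd β ck z)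

/-- `S(w) = Σ_{j ∈ C(w)} λ_{(j)⁻_w}`, where `C(w) = {j : |β(w)_j| = |w|}`. -/
def Sval {p : ℕ} (lam β : Fin p → ℝ) (ck : ℝ) (w : ℝ) : ℝ :=
  ∑ j, if |cupd β ck w j| = |w| then lam ((sortPerm (cupd β ck w))⁻¹ j) else 0

/-- squared Euclidean norm -/
def sqnorm {n : ℕ} (v : Fin n → ℝ) : ℝ := ∑ i, (v i) ^ 2

/-- `G(z) = (1/2)‖y − Xβ(z)‖² + H(z)`. -/
def Gfun {n p : ℕ} (lam : Fin p → ℝ) (X : Matrix (Fin n) (Fin p) ℝ) (y : Fin n → ℝ)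
    (β : Fin p → ℝ) (ck : ℝ) (z : ℝ) : ℝ :=
  (1/2) * sqnorm (fun i => y i - ∑ j, X i j * cupd β ck z j) + Hfun lam β ck z

/-- `x̃ = Σ_{j ∈ C_k} sign(β_j) X_{:j}`. -/
def xtil {n p : ℕ} (X : Matrix (Fin n) (Fin p) ℝ) (β : Fin p → ℝ) (ck : ℝ) : Fin n → ℝ :=
  fun i => ∑ j, if |β j| = ck then sgn (β j) * X i j else 0

/-- `γ = c_k ω + x̃ᵀ r` where `r = y − Xβ` and `ω = ‖x̃‖²`. -/
def gam {n p : ℕ} (X : Matrix (Fin n) (Fin p) ℝ) (y : Fin n → ℝ) (β : Fin p → ℝ) (ck : ℝ) : ℝ :=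
  ck * sqnorm (xtil X β ck) + ∑ i, xtil X β ck i * (y i - ∑ j, X i j * β j)

end

lemma abs_sgn (t : ℝ) : |sgn t| = 1 := by
  unfold sgn; split_ifs <;> simp

lemma sgn_mul_abs (t : ℝ) : sgn t * |t| = t := by
  unfold sgn
  split_ifs with h
  · rw [abs_of_neg h]; ring
  · rw [abs_of_nonneg (not_lt.mp h)]; ring

lemma abs_sgn_mul (t z : ℝ) : |sgn t * z| = |z| := by
  rw [abs_mul, abs_sgn, one_mul]

lemma mul_sgn (t : ℝ) : t * sgn t = |t| := by
  unfold sgn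
  split_ifs with h
  · rw [abs_of_neg h]; ring
  · rw [abs_of_nonneg (not_lt.mp h)]; ring

/-- Absolute values of the entries of `β(z)`. -/
lemma abs_cupd {p : ℕ} (β : Fin p → ℝ) (ck z : ℝ) (j : Fin p) :
    |cupd β ck z j| = if |β j| = ck then |z| else |β j| := by
  unfold cupd
  split_ifs
  · exact abs_sgn_mul _ _
  · rfl

lemma sortPerm_antitone {p : ℕ} (b : Fin p → ℝ) :
    Antitone fun j => |b (sortPerm b j)| := by
  intro i j hij
  exact Tuple.monotone_sort (fun j => |b j|) (Fin.rev_le_rev.mpr hij)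

/-- Rearrangement inequality: any assignment of the weights bounds the sorted norm from below. -/
lemma sum_perm_le_sortedL1 {p : ℕ} {lam : Fin p → ℝ} (hlam : Antitone lam) (b : Fin p → ℝ)
    (σ : Equiv.Perm (Fin p)) : ∑ j, lam (σ⁻¹ j) * |b j| ≤ sortedL1 lam b := by
  have h := (hlam.monovary (sortPerm_antitone b)).sum_mul_comp_perm_le_sum_mul
    (σ := σ.trans (sortPerm b).symm)
  rw [← Equiv.sum_comp σ fun j => lam (σ⁻¹ j) * |b j|]
  simpa [sortedL1] using h

/-- Equality in the rearrangement inequality for a sorting permutation. -/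
lemma sortedL1_eq_sum_perm {p : ℕ} {lam : Fin p → ℝ} (hlam : Antitone lam) (b : Fin p → ℝ)
    (σ : Equiv.Perm (Fin p)) (hσ : Antitone fun j => |b (σ j)|) :
    sortedL1 lam b = ∑ j, lam (σ⁻¹ j) * |b j| := by
  refine le_antisymm ?_ (sum_perm_le_sortedL1 hlam b σ)
  have h := (hlam.monovary hσ).sum_mul_comp_perm_le_sum_mul (σ := (sortPerm b).trans σ.symm)
  rw [← Equiv.sum_comp σ fun j => lam (σ⁻¹ j) * |b j|]
  simpa [sortedL1] using h

lemma Hfun_abs {p : ℕ} (lam β : Fin p → ℝ) (ck : ℝ) {u v : ℝ} (h : |u| = |v|) :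
    Hfun lam β ck u = Hfun lam β ck v := by
  have hab : (fun j => |cupd β ck u j|) = fun j => |cupd β ck v j| := by
    funext j; rw [abs_cupd, abs_cupd, h]
  have hs : sortPerm (cupd β ck u) = sortPerm (cupd β ck v) := by
    unfold sortPerm; rw [hab]
  unfold Hfun sortedL1
  rw [hs]
  exact Finset.sum_congr rfl fun j _ => by rw [congrFun hab]

/-- If no entry outside the cluster separates `w` from `c`, nor equals `w`, then `S(w)` is a
subgradient of `H`, as a function of the absolute value, at `c`. -/
lemma Hfun_subgradient {p : ℕ} {lam : Fin p → ℝ} (hlam : Antitone lam) (β : Fin p → ℝ)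
    (ck : ℝ) {c w : ℝ} (hc : 0 ≤ c) (hw : 0 ≤ w)
    (hle : ∀ j, |β j| ≠ ck → |β j| ≤ w → |β j| ≤ c)
    (hge : ∀ j, |β j| ≠ ck → w ≤ |β j| → c ≤ |β j|)
    (hne : ∀ j, |β j| ≠ ck → |β j| ≠ w) (v : ℝ) :
    Hfun lam β ck c + Sval lam β ck w * (|v| - c) ≤ Hfun lam β ck v := by
  set σ := sortPerm (cupd β ck w) with hσ
  have hanti : Antitone fun j => |cupd β ck c (σ j)| := by
    intro i j hij
    have h := sortPerm_antitone (cupd β ck w) hij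
    simp only [← hσ, abs_cupd, abs_of_nonneg hw, abs_of_nonneg hc] at h ⊢
    split_ifs at h ⊢ with h1 h2 h2
    · exact le_rfl
    · exact hge _ h2 h
    · exact hle _ h1 h
    · exact h
  have hS : Sval lam β ck w = ∑ j, if |β j| = ck then lam (σ⁻¹ j) else 0 := by
    unfold Sval
    refine Finset.sum_congr rfl fun j _ => ?_
    rw [abs_cupd, abs_of_nonneg hw]
    by_cases h : |β j| = ck
    · simp [h, hσ]
    · simp [h, hne j h]
  refine le_trans (le_of_eq ?_) (sum_perm_le_sortedL1 hlam (cupd β ck v) σ)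
  unfold Hfun
  rw [sortedL1_eq_sum_perm hlam _ σ hanti, hS, Finset.sum_mul, ← Finset.sum_add_distrib]
  refine Finset.sum_congr rfl fun j _ => ?_
  rw [abs_cupd, abs_cupd, abs_of_nonneg hc]
  split_ifs <;> ring

/-- The least-squares part of `G` is a quadratic in `z` with coefficients `ω / 2` and `-γ`. -/
lemma sqnorm_residual_cupd {n p : ℕ} (X : Matrix (Fin n) (Fin p) ℝ) (y : Fin n → ℝ)
    (β : Fin p → ℝ) (ck : ℝ) (z : ℝ) :
    sqnorm (fun i => y i - ∑ j, X i j * cupd β ck z j) =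
      sqnorm (fun i => y i - ∑ j, X i j * β j) + sqnorm (xtil X β ck) * (z ^ 2 + ck ^ 2)
        - 2 * z * gam X y β ck + 2 * ck * (gam X y β ck - ck * sqnorm (xtil X β ck)) := by
  have hres : ∀ i, y i - ∑ j, X i j * cupd β ck z j =
      (y i - ∑ j, X i j * β j) - xtil X β ck i * (z - ck) := by
    intro i
    have : ∑ j, X i j * cupd β ck z j = ∑ j, X i j * β j + xtil X β ck i * (z - ck) := by
      unfold xtil
      rw [Finset.sum_mul, ← Finset.sum_add_distrib]
      refine Finset.sum_congr rfl fun j _ => ?_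
      unfold cupd
      split_ifs with h
      · have := sgn_mul_abs (β j)
        rw [h] at this
        linear_combination X i j * this
      · ring
    rw [this]; ring
  simp only [hres]
  have hexp : sqnorm (fun i => (y i - ∑ j, X i j * β j) - xtil X β ck i * (z - ck)) =
      sqnorm (fun i => y i - ∑ j, X i j * β j)
        - 2 * (z - ck) * ∑ i, xtil X β ck i * (y i - ∑ j, X i j * β j)
        + (z - ck) ^ 2 * sqnorm (xtil X β ck) := by
    unfold sqnorm
    rw [Finset.mul_sum, Finset.mul_sum, ← Finset.sum_sub_distrib, ← Finset.sum_add_distrib]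
    exact Finset.sum_congr rfl fun i _ => by ring
  rw [hexp, gam]
  ring

/-- `G` up to a constant: `ω z² / 2 - γ z + H(z)`. -/
lemma Gfun_sub_Gfun {n p : ℕ} (lam : Fin p → ℝ) (X : Matrix (Fin n) (Fin p) ℝ) (y : Fin n → ℝ)
    (β : Fin p → ℝ) (ck u v : ℝ) :
    Gfun lam X y β ck u - Gfun lam X y β ck v =
      sqnorm (xtil X β ck) / 2 * (u ^ 2 - v ^ 2) - gam X y β ck * (u - v)
        + (Hfun lam β ck u - Hfun lam β ck v) := by
  unfold Gfun
  rw [sqnorm_residual_cupd, sqnorm_residual_cupd]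
  ring

/-- if `c' ∈ c^{∖k}`, `c' > 0` and
`ω c' + S(c' − ε_c) ≤ |γ| ≤ ω c' + S(c' + ε_c)`, then `z = sign(γ)·c'` minimizes `G`. -/
theorem cluster_value_minimizes_G
    {n p m : ℕ} (hn : 0 < n) (hp : 0 < p) (hm : 0 < m)
    (lam : Fin p → ℝ)
    (hlam_mono : ∀ i j : Fin p, i ≤ j → lam j ≤ lam i)
    (hlam_nonneg : ∀ j, 0 ≤ lam j)
    (β : Fin p → ℝ) (c : Fin m → ℝ)
    (hc_anti : StrictAnti c) (hc_nonneg : ∀ i, 0 ≤ c i)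
    (h_attain : ∀ i, ∃ j, |β j| = c i)
    (h_cover : ∀ j, ∃ i, |β j| = c i)
    (k : Fin m)
    (ε : ℝ) (hε_pos : 0 < ε)
    (hε_sep : ∀ i j, i ≠ j → ε < |c i - c j|)
    (hε_min : ∀ i, c i ≠ 0 → ε < c i)
    (X : Matrix (Fin n) (Fin p) ℝ) (y : Fin n → ℝ)
    (c' : ℝ) (hc' : ∃ i, i ≠ k ∧ c' = c i) (hc'_pos : 0 < c')
    (hγ_lo : sqnorm (xtil X β (c k)) * c' + Sval lam β (c k) (c' - ε) ≤ |gam X y β (c k)|)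
    (hγ_hi : |gam X y β (c k)| ≤ sqnorm (xtil X β (c k)) * c' + Sval lam β (c k) (c' + ε)) :
    ∀ w : ℝ,
      Gfun lam X y β (c k) (sgn (gam X y β (c k)) * c') ≤ Gfun lam X y β (c k) w := by
  obtain ⟨i₀, hi₀, rfl⟩ := hc'
  intro v
  have hlam : Antitone lam := fun i j h => hlam_mono i j h
  have hεlt : ε < c i₀ := hε_min i₀ hc'_pos.ne'
  have hsep : ∀ j, |β j| = c i₀ ∨ ε < |β j| - c i₀ ∨ ε < c i₀ - |β j| := by
    intro j
    obtain ⟨l, hl⟩ := h_cover j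
    rw [hl]
    by_cases h : l = i₀
    · exact Or.inl (by rw [h])
    · right
      rcases lt_abs.mp (hε_sep l i₀ h) with h | h
      · exact Or.inl h
      · exact Or.inr (by linarith)
  have hlo := Hfun_subgradient hlam β (c k) (c := c i₀) (w := c i₀ - ε) hc'_pos.le
    (by linarith) (fun j _ _ => by linarith)
    (fun j _ _ => by rcases hsep j with h | h | h <;> linarith)
    (fun j _ h' => by rcases hsep j with h | h | h <;> linarith) v
  have hhi := Hfun_subgradient hlam β (c k) (c := c i₀) (w := c i₀ + ε) hc'_pos.le
    (by linarith) (fun j _ _ => by rcases hsep j with h | h | h <;> linarith)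
    (fun j _ _ => by linarith)
    (fun j _ h' => by rcases hsep j with h | h | h <;> linarith) v
  have hG := Gfun_sub_Gfun lam X y β (c k) v (sgn (gam X y β (c k)) * c i₀)
  rw [Hfun_abs lam β (c k) (abs_sgn_mul (gam X y β (c k)) (c i₀))] at hG
  set γ := gam X y β (c k)
  set ω := sqnorm (xtil X β (c k))
  have hω : 0 ≤ ω := Finset.sum_nonneg fun i _ => sq_nonneg _
  have hsq : (sgn γ * c i₀) ^ 2 = c i₀ ^ 2 := by
    rw [← sq_abs, abs_sgn_mul, sq_abs]
  have hγs : γ * (sgn γ * c i₀) = |γ| * c i₀ := by rw [← mul_assoc, mul_sgn]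
  have hγv : γ * v ≤ |γ| * |v| := (le_abs_self _).trans (abs_mul _ _).le
  rw [hsq, ← sq_abs v, mul_sub γ, hγs] at hG
  have hωt : 0 ≤ ω * (|v| - c i₀) ^ 2 := mul_nonneg hω (sq_nonneg _)
  rcases le_total (c i₀) |v| with h | h
  · nlinarith [mul_nonneg (sub_nonneg.mpr h) (sub_nonneg.mpr hγ_hi)]
  · nlinarith [mul_nonneg (sub_nonneg.mpr h) (sub_nonneg.mpr hγ_lo)]
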